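/- Let n ≥ 2 and N ≥ 1. Fix x₀ ∈ ℝⁿ with |x₀| = 1 and a unit vector v₀ ∈ ℝⁿ with ⟪x₀, v₀⟫ = 0. Let Φ, Ψ : ℝⁿ → Matrix (Fin N) (Fin N) ℂ be real-analytic. Suppose there exists δ > 0 such that for every unit vector v ∈ ℝⁿ with |v − v₀| < δ and every p ∈ ℝⁿ with ⟪p, v⟫ = 0, |p − x₀| < δ, and |p| < 1, the following holds with a := √(1 − |p|²): whenever U, V : ℝ → Matrix (Fin N) (Fin N) ℂ are differentiable with U′(t) = −Φ(p + t v) · U(t) and V′(t) = −Ψ(p + t v) · V(t) for all t ∈ ℝ and U(a) = V(a) = Id, one has U(−a) = V(−a). Then Φ(x) = Ψ(x) for every x in the closed unit ball {x ∈ ℝⁿ : |x| ≤ 1}. -/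

import Mathlib

open Matrix
open scoped RealInnerProductSpace

attribute [local instance] Matrix.normedAddCommGroup Matrix.normedSpace

/-!
Along the chord of half-length `a` centred on the ray through a boundary point `y`, let `W' = W Φ`
and `V' + Ψ V = 0`, with `W = V = 1` at the exit point. Equality of the scattering data says that
`W V` takes the same value at both ends of the chord, and `(W V)' = W (Φ - Ψ) V`, so by Rolle's
theorem every real functional of `W (Φ - Ψ) V` vanishes somewhere on the open chord. As `a → 0`
the chord shrinks to `y` and `W, V → 1`. If the radial derivatives of `D = Φ - Ψ` of order less
than `m` vanish on the sphere near `y`, then `D x / (‖x‖ - 1) ^ m` tends to the `m`-th radial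
derivative at `y` divided by `m!` as `x → y` inside the ball; testing against functionals, this
derivative vanishes too. By induction `D` is radially flat on the sphere near the glancing point,
so by analyticity it vanishes on an open cone and hence everywhere.
-/

open Filter Set
open scoped ContDiff Nat Topology

section DysonSeries

variable {E : Type*} [NormedAddCommGroup E] [NormedSpace ℝ E]

/-- The `k`-th Picard iterate increment for the initial value problem `u' = L u`, `u t₀ = u₀`. -/
noncomputable def dysonTerm (L : ℝ → E →L[ℝ] E) (t₀ : ℝ) (u₀ : E) : ℕ → ℝ → E
  | 0 => fun _ ↦ u₀
  | k + 1 => fun t ↦ ∫ s in t₀..t, L s (dysonTerm L t₀ u₀ k s)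

/-- The Dyson series, that is, the solution of the linear initial value problem `u' = L u`,
`u t₀ = u₀` as the sum of iterated integrals. -/
noncomputable def dysonSeries (L : ℝ → E →L[ℝ] E) (t₀ : ℝ) (u₀ : E) (t : ℝ) : E :=
  ∑' k, dysonTerm L t₀ u₀ k t

variable {L : ℝ → E →L[ℝ] E} {t₀ t K : ℝ} {u₀ : E}

@[simp]
theorem dysonTerm_succ_self (k : ℕ) : dysonTerm L t₀ u₀ (k + 1) t₀ = 0 :=
  intervalIntegral.integral_same

@[simp]
theorem dysonSeries_self : dysonSeries L t₀ u₀ t₀ = u₀ := by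
  refine (tsum_eq_single 0 fun k hk ↦ ?_).trans rfl
  obtain ⟨j, rfl⟩ := Nat.exists_eq_succ_of_ne_zero hk
  exact dysonTerm_succ_self j

theorem norm_dysonTerm_le (hK : ∀ s ∈ uIcc t₀ t, ‖L s‖ ≤ K) (k : ℕ) :
    ‖dysonTerm L t₀ u₀ k t‖ ≤ ‖u₀‖ * ((K * |t - t₀|) ^ k / k !) := by
  induction k generalizing t with
  | zero => simp [dysonTerm]
  | succ k ih =>
    have integrand_le : ∀ s ∈ uIoc t₀ t,
        ‖L s (dysonTerm L t₀ u₀ k s)‖ ≤ ‖u₀‖ * K ^ (k + 1) / k ! * |s - t₀| ^ k := by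
      intro s hs
      have hs' : s ∈ uIcc t₀ t := uIoc_subset_uIcc hs
      calc ‖L s (dysonTerm L t₀ u₀ k s)‖
          ≤ K * (‖u₀‖ * ((K * |s - t₀|) ^ k / k !)) :=
            (L s).le_of_opNorm_le_of_le (hK s hs')
              (ih fun r hr ↦ hK r (uIcc_subset_uIcc_left hs' hr))
        _ = ‖u₀‖ * K ^ (k + 1) / k ! * |s - t₀| ^ k := by ring
    calc ‖∫ s in t₀..t, L s (dysonTerm L t₀ u₀ k s)‖
        ≤ ∫ s in uIoc t₀ t, ‖u₀‖ * K ^ (k + 1) / k ! * |s - t₀| ^ k := by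
          rw [intervalIntegral.norm_intervalIntegral_eq]
          exact MeasureTheory.norm_integral_le_of_norm_le
            (Continuous.integrableOn_uIoc (by fun_prop))
            ((MeasureTheory.ae_restrict_iff' measurableSet_uIoc).2 (.of_forall integrand_le))
      _ = ‖u₀‖ * ((K * |t - t₀|) ^ (k + 1) / (k + 1)!) := by
          rw [MeasureTheory.integral_const_mul, integral_pow_abs_sub_uIoc, Nat.factorial_succ]
          push_cast
          field_simp
          ring

theorem summable_dysonTerm_of_norm_le [CompleteSpace E] (hK : ∀ s ∈ uIcc t₀ t, ‖L s‖ ≤ K) :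
    Summable fun k ↦ dysonTerm L t₀ u₀ k t :=
  .of_norm_bounded ((Real.summable_pow_div_factorial _).mul_left _) (norm_dysonTerm_le hK)

theorem summable_dysonTerm [CompleteSpace E] (hL : Continuous L) :
    Summable fun k ↦ dysonTerm L t₀ u₀ k t := by
  obtain ⟨K, hK⟩ := isCompact_uIcc.exists_bound_of_continuousOn (hL.continuousOn (s := uIcc t₀ t))
  exact summable_dysonTerm_of_norm_le hK

theorem norm_dysonSeries_sub_le [CompleteSpace E] (hK : ∀ s ∈ uIcc t₀ t, ‖L s‖ ≤ K) :
    ‖dysonSeries L t₀ u₀ t - u₀‖ ≤ ‖u₀‖ * (Real.exp (K * |t - t₀|) - 1) := by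
  have hexp := NormedSpace.expSeries_div_hasSum_exp (K * |t - t₀|)
  rw [← Real.exp_eq_exp_ℝ, ← hasSum_nat_add_iff' 1] at hexp
  have hsub : dysonSeries L t₀ u₀ t - u₀ = ∑' k, dysonTerm L t₀ u₀ (k + 1) t := by
    rw [dysonSeries, (summable_dysonTerm_of_norm_le hK).tsum_eq_zero_add]
    exact add_sub_cancel_left _ _
  rw [hsub]
  exact tsum_of_norm_bounded (by simpa using hexp.mul_left ‖u₀‖) fun k ↦ norm_dysonTerm_le hK _

theorem continuous_dysonTerm (hL : Continuous L) (k : ℕ) :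
    Continuous (dysonTerm L t₀ u₀ k) := by
  induction k with
  | zero => exact continuous_const
  | succ k ih =>
    exact intervalIntegral.continuous_primitive
      (fun _ _ ↦ (hL.clm_apply ih).intervalIntegrable _ _) t₀

theorem hasDerivAt_dysonTerm_succ [CompleteSpace E] (hL : Continuous L) (k : ℕ) (t : ℝ) :
    HasDerivAt (dysonTerm L t₀ u₀ (k + 1)) (L t (dysonTerm L t₀ u₀ k t)) t :=
  ((hL.clm_apply (continuous_dysonTerm hL k)).integral_hasStrictDerivAt t₀ t).hasDerivAt

theorem hasDerivAt_dysonSeries [CompleteSpace E] (hL : Continuous L) (t : ℝ) :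
    HasDerivAt (dysonSeries L t₀ u₀) (L t (dysonSeries L t₀ u₀ t)) t := by
  set R := |t - t₀| + 1
  have hR : 0 < R := by positivity
  obtain ⟨K, hK⟩ := (isCompact_closedBall t₀ R).exists_bound_of_continuousOn hL.continuousOn
  have hK₀ : 0 ≤ K := (norm_nonneg _).trans (hK t₀ (Metric.mem_closedBall_self hR.le))
  have deriv_le (k : ℕ) (s : ℝ) (hs : s ∈ Metric.ball t₀ R) :
      ‖L s (dysonTerm L t₀ u₀ k s)‖ ≤ K * (‖u₀‖ * ((K * R) ^ k / k !)) := by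
    have hs' := Metric.ball_subset_closedBall hs
    have hseg : uIcc t₀ s ⊆ Metric.closedBall t₀ R := by
      rw [← segment_eq_uIcc]
      exact (convex_closedBall t₀ R).segment_subset (Metric.mem_closedBall_self hR.le) hs'
    refine (L s).le_of_opNorm_le_of_le (hK s hs')
      ((norm_dysonTerm_le fun r hr ↦ hK r (hseg hr)) k |>.trans ?_)
    gcongr
    exact hs'
  have hderiv := hasDerivAt_tsum_of_isPreconnected
    (((Real.summable_pow_div_factorial _).mul_left _).mul_left K) Metric.isOpen_ball
    (convex_ball t₀ R).isPreconnected (fun k s _ ↦ hasDerivAt_dysonTerm_succ hL k s) deriv_le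
    (Metric.mem_ball_self hR) (by simp [summable_zero]) (y := t) (by simp [R, Real.dist_eq])
  have hseries : dysonSeries L t₀ u₀ = fun s ↦ u₀ + ∑' k, dysonTerm L t₀ u₀ (k + 1) s := by
    funext s
    exact (summable_dysonTerm hL).tsum_eq_zero_add
  rw [dysonSeries, (L t).map_tsum (summable_dysonTerm hL), hseries]
  exact hderiv.const_add u₀

end DysonSeries

section ScatteringData

/-- The nonabelian ray transforms of the Higgs fields `F` and `G` along the segment `[-a, a]`
agree: the fundamental solutions of `U' + F U = 0` and `V' + G V = 0` normalized to `1` at the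
exit time `a` coincide at the entry time `-a`. -/
def SameScatteringData {A : Type*} [Ring A] [Module ℝ A] [TopologicalSpace A] [ContinuousSMul ℝ A]
    (F G : ℝ → A) (a : ℝ) : Prop :=
  ∀ U V : ℝ → A, (∀ t, HasDerivAt U (-(F t * U t)) t) → (∀ t, HasDerivAt V (-(G t * V t)) t) →
    U a = 1 → V a = 1 → U (-a) = V (-a)

theorem hasDerivAt_clm_comp {𝕜 A B : Type*} [NontriviallyNormedField 𝕜] [AddCommGroup A]
    [Module 𝕜 A] [TopologicalSpace A] [ContinuousSMul 𝕜 A] [AddCommGroup B] [Module 𝕜 B]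
    [TopologicalSpace B] [ContinuousSMul 𝕜 B] (T : A →L[𝕜] B) {U : 𝕜 → A} {U' : A} {t : 𝕜}
    (hU : HasDerivAt U U' t) : HasDerivAt (fun s ↦ T (U s)) (T U') t := by
  have hU' : HasFDerivAt U (ContinuousLinearMap.toSpanSingleton 𝕜 U') t := hU
  change HasFDerivAt _ (ContinuousLinearMap.toSpanSingleton 𝕜 (T U')) t
  rw [hasFDerivAt_iff_isLittleOTVS] at hU' ⊢
  simpa [Function.comp_def] using T.isBigOTVS_comp.trans_isLittleOTVS hU'

theorem SameScatteringData.map {A B : Type*} [Ring A] [Algebra ℝ A] [TopologicalSpace A]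
    [ContinuousSMul ℝ A] [Ring B] [Algebra ℝ B] [TopologicalSpace B] [ContinuousSMul ℝ B]
    {F G : ℝ → A} {a : ℝ} (h : SameScatteringData F G a) (e : A ≃A[ℝ] B) :
    SameScatteringData (fun t ↦ e (F t)) (fun t ↦ e (G t)) a := by
  intro U V hU hV hUa hVa
  have pull {H : ℝ → A} {W : ℝ → B} (hW : ∀ t, HasDerivAt W (-(e (H t) * W t)) t) (t : ℝ) :
      HasDerivAt (fun s ↦ e.symm (W s)) (-(H t * e.symm (W t))) t := by
    have hderiv : HasDerivAt (fun s ↦ e.symm (W s)) (e.symm (-(e (H t) * W t))) t :=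
      hasDerivAt_clm_comp (e.symm.toContinuousLinearEquiv : B →L[ℝ] A) (hW t)
    simpa using hderiv
  exact e.symm.injective (h _ _ (pull hU) (pull hV) (by simp [hUa]) (by simp [hVa]))

variable {A : Type*} [NormedRing A] [NormedAlgebra ℝ A]

theorem hasDerivAt_mul_of_transport {F G W V : ℝ → A} {t : ℝ}
    (hW : HasDerivAt W (W t * F t) t) (hV : HasDerivAt V (-(G t * V t)) t) :
    HasDerivAt (fun s ↦ W s * V s) (W t * (F t - G t) * V t) t := by
  convert hW.fun_mul hV using 1
  noncomm_ring

variable [CompleteSpace A]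

theorem exists_right_transport {F : ℝ → A} (hF : Continuous F) (a : ℝ) :
    ∃ W : ℝ → A, (∀ t, HasDerivAt W (W t * F t) t) ∧ W a = 1 ∧
      ∀ t K, (∀ s ∈ uIcc a t, ‖F s‖ ≤ K) →
        ‖W t - 1‖ ≤ ‖(1 : A)‖ * (Real.exp (K * |t - a|) - 1) := by
  have hL : Continuous fun t ↦ (ContinuousLinearMap.mul ℝ A).flip (F t) := by fun_prop
  refine ⟨dysonSeries _ a 1, hasDerivAt_dysonSeries hL, dysonSeries_self, fun t K hK ↦ ?_⟩
  refine norm_dysonSeries_sub_le fun s hs ↦ ?_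
  refine ContinuousLinearMap.opNorm_le_bound _ ((norm_nonneg _).trans (hK s hs)) fun x ↦ ?_
  rw [mul_comm K]
  exact norm_mul_le_of_le le_rfl (hK s hs)

theorem exists_left_transport {G : ℝ → A} (hG : Continuous G) (a : ℝ) :
    ∃ V : ℝ → A, (∀ t, HasDerivAt V (-(G t * V t)) t) ∧ V a = 1 ∧
      ∀ t K, (∀ s ∈ uIcc a t, ‖G s‖ ≤ K) →
        ‖V t - 1‖ ≤ ‖(1 : A)‖ * (Real.exp (K * |t - a|) - 1) := by
  have hL : Continuous fun t ↦ -ContinuousLinearMap.mul ℝ A (G t) := by fun_prop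
  refine ⟨dysonSeries _ a 1, hasDerivAt_dysonSeries hL, dysonSeries_self, fun t K hK ↦ ?_⟩
  refine norm_dysonSeries_sub_le fun s hs ↦ ?_
  rw [norm_neg]
  exact (ContinuousLinearMap.opNorm_mul_apply_le ℝ A _).trans (hK s hs)

/-- Pseudolinearization: for `W' = W F` and `V' + G V = 0` the product `W V` has derivative
`W (F - G) V`, and equality of the scattering data gives it the same value at both ends of the
segment, so that Rolle's theorem applies. -/
theorem SameScatteringData.exists_mem_Ioo_functional_eq_zero {F G : ℝ → A} {a K : ℝ}
    (h : SameScatteringData F G a) (hF : Continuous F) (hG : Continuous G) (ha : 0 < a)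
    (hFK : ∀ t ∈ Icc (-a) a, ‖F t‖ ≤ K) (hGK : ∀ t ∈ Icc (-a) a, ‖G t‖ ≤ K) (l : A →L[ℝ] ℝ) :
    ∃ t ∈ Ioo (-a) a, ∃ W V : A, l (W * (F t - G t) * V) = 0 ∧
      ‖W - 1‖ ≤ ‖(1 : A)‖ * (Real.exp (K * (2 * a)) - 1) ∧
      ‖V - 1‖ ≤ ‖(1 : A)‖ * (Real.exp (K * (2 * a)) - 1) := by
  obtain ⟨W, hW, -, hW_le⟩ := exists_right_transport hF a
  obtain ⟨U, hU, hUa, -⟩ := exists_left_transport hF a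
  obtain ⟨V, hV, hVa, hV_le⟩ := exists_left_transport hG a
  have hWU : W (-a) * U (-a) = W a * U a :=
    is_const_of_deriv_eq_zero (f := fun t ↦ W t * U t)
      (fun t ↦ (hasDerivAt_mul_of_transport (hW t) (hU t)).differentiableAt)
      (fun t ↦ by simp [(hasDerivAt_mul_of_transport (hW t) (hU t)).deriv]) _ _
  have hderiv (t : ℝ) : HasDerivAt (fun s ↦ l (W s * V s)) (l (W t * (F t - G t) * V t)) t :=
    l.hasFDerivAt.comp_hasDerivAt t (hasDerivAt_mul_of_transport (hW t) (hV t))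
  have hends : l (W (-a) * V (-a)) = l (W a * V a) := by
    rw [← h U V hU hV hUa hVa, hWU, hUa, hVa]
  obtain ⟨t, ht, hlt⟩ := exists_hasDerivAt_eq_zero (neg_lt_self ha)
    (fun t _ ↦ (hderiv t).continuousAt.continuousWithinAt) hends fun t _ ↦ hderiv t
  have hK : 0 ≤ K := (norm_nonneg _).trans (hFK a ⟨by linarith, le_rfl⟩)
  have hseg : uIcc a t ⊆ Icc (-a) a := by
    rw [uIcc_of_ge ht.2.le]
    exact Icc_subset_Icc_left ht.1.le
  have hexp : ‖(1 : A)‖ * (Real.exp (K * |t - a|) - 1)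
      ≤ ‖(1 : A)‖ * (Real.exp (K * (2 * a)) - 1) := by
    gcongr
    exact abs_le.2 ⟨by linarith [ht.1], by linarith [ht.2]⟩
  exact ⟨t, ht, W t, V t, hlt, (hW_le t K fun s hs ↦ hFK s (hseg hs)).trans hexp,
    (hV_le t K fun s hs ↦ hGK s (hseg hs)).trans hexp⟩

end ScatteringData

section Chord

variable {X : Type*} [NormedAddCommGroup X] [InnerProductSpace ℝ X]

/-- The point at time `t` on the chord of the unit ball in direction `v` with midpoint
`√(1 - a²) y`. For orthonormal `y` and `v` the chord is parametrized by `[-a, a]`, and it collapses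
to the boundary point `y` as `a → 0`. -/
noncomputable def chord (y v : X) (a t : ℝ) : X := √(1 - a ^ 2) • y + t • v

theorem norm_chord_lt_one {y v : X} (hy : ‖y‖ = 1) (hv : ‖v‖ = 1) (hyv : ⟪y, v⟫ = 0) {a t : ℝ}
    (ha : a ≤ 1) (ht : t ∈ Ioo (-a) a) : ‖chord y v a t‖ < 1 := by
  have ha₀ : 0 < a := by linarith [ht.1, ht.2]
  have horth : ⟪√(1 - a ^ 2) • y, t • v⟫ = 0 := by simp [inner_smul_left, inner_smul_right, hyv]
  have hsq : ‖chord y v a t‖ ^ 2 = 1 - a ^ 2 + t ^ 2 := by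
    rw [chord, norm_add_sq_real, horth, norm_smul, norm_smul, hy, hv, mul_one, mul_one,
      Real.norm_eq_abs, Real.norm_eq_abs, sq_abs, sq_abs, Real.sq_sqrt (by nlinarith)]
    ring
  rw [← sq_lt_one_iff₀ (norm_nonneg _), hsq]
  linarith [sq_lt_sq' ht.1 ht.2]

theorem continuous_chord (y v : X) : Continuous fun p : ℝ × ℝ ↦ chord y v p.1 p.2 := by
  unfold chord
  fun_prop

theorem eventually_forall_chord (v : X) {y : X} {P : X → Prop} (hP : ∀ᶠ x in 𝓝 y, P x) :
    ∀ᶠ a in 𝓝[>] (0 : ℝ), ∀ t ∈ Icc (-a) a, P (chord y v a t) := by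
  have hlim : Tendsto (fun p : ℝ × ℝ ↦ chord y v p.1 p.2) (𝓝 (0, 0)) (𝓝 y) := by
    simpa [chord] using (continuous_chord y v).tendsto (0, 0)
  obtain ⟨ε, hε, hball⟩ := Metric.eventually_nhds_iff.1 (hlim.eventually hP)
  filter_upwards [Ioo_mem_nhdsGT hε] with a ha t ht
  refine hball (y := (a, t)) ?_
  rw [Prod.dist_eq, max_lt_iff, Real.dist_0_eq_abs, Real.dist_0_eq_abs, abs_of_pos ha.1]
  exact ⟨ha.2, (abs_le.2 ht).trans_lt ha.2⟩

variable {A : Type*} [NormedRing A] [NormedAlgebra ℝ A] [CompleteSpace A] {Φ Ψ : X → A}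

theorem frequently_functional_eq_zero_of_sameScatteringData (hΦ : Continuous Φ)
    (hΨ : Continuous Ψ) {y v : X} (hy : ‖y‖ = 1) (hv : ‖v‖ = 1) (hyv : ⟪y, v⟫ = 0)
    (hscat : ∀ᶠ a in 𝓝[>] (0 : ℝ), SameScatteringData (fun t ↦ Φ (chord y v a t))
      (fun t ↦ Ψ (chord y v a t)) a) (l : A →L[ℝ] ℝ) :
    ∃ᶠ q in 𝓝[Metric.ball 0 1] y ×ˢ 𝓝 (1 : A × A),
      l (q.2.1 * (Φ q.1 - Ψ q.1) * q.2.2) = 0 := by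
  intro hne
  obtain ⟨P, hP, Q, hQ, hPQ⟩ := eventually_prod_iff.1 hne
  obtain ⟨ε, hε, hQε⟩ := Metric.eventually_nhds_iff.1 hQ
  set K := max ‖Φ y‖ ‖Ψ y‖ + 1
  have hΦK : ∀ᶠ x in 𝓝 y, ‖Φ x‖ < K :=
    hΦ.norm.continuousAt.eventually_lt_const ((le_max_left _ _).trans_lt (lt_add_one _))
  have hΨK : ∀ᶠ x in 𝓝 y, ‖Ψ x‖ < K :=
    hΨ.norm.continuousAt.eventually_lt_const ((le_max_right _ _).trans_lt (lt_add_one _))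
  have hexp : ∀ᶠ a in 𝓝[>] (0 : ℝ), ‖(1 : A)‖ * (Real.exp (K * (2 * a)) - 1) < ε := by
    have hcont : Continuous fun a ↦ ‖(1 : A)‖ * (Real.exp (K * (2 * a)) - 1) := by fun_prop
    exact (hcont.continuousAt.eventually_lt_const (by simpa using hε)).filter_mono
      nhdsWithin_le_nhds
  obtain ⟨a, hsame, hbound, hexp, hnear, ha⟩ := (hscat.and <|
    (eventually_forall_chord v (hΦK.and hΨK)).and <| hexp.and <|
    (eventually_forall_chord v (eventually_nhdsWithin_iff.1 hP)).and <|
    Ioo_mem_nhdsGT one_pos).exists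
  have hchord : Continuous (chord y v a) := (continuous_chord y v).comp (.prodMk_right a)
  obtain ⟨t, ht, W, V, hl, hW, hV⟩ := hsame.exists_mem_Ioo_functional_eq_zero
    (hΦ.comp hchord) (hΨ.comp hchord) ha.1 (fun t ht ↦ (hbound t ht).1.le)
    (fun t ht ↦ (hbound t ht).2.le) l
  refine hPQ (x := chord y v a t) (y := (W, V)) (hnear t (Ioo_subset_Icc_self ht) ?_) (hQε ?_) hl
  · exact mem_ball_zero_iff.2 (norm_chord_lt_one hy hv hyv ha.2.le ht)
  · rw [Prod.dist_eq, max_lt_iff, dist_eq_norm, dist_eq_norm]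
    exact ⟨hW.trans_lt hexp, hV.trans_lt hexp⟩

end Chord

section RadialDerivatives

variable {X Y : Type*} [NormedAddCommGroup X] [NormedSpace ℝ X] [NormedAddCommGroup Y]
  [NormedSpace ℝ Y]

/-- The `j`-th radial derivative of `D` at `y`, that is, the `j`-th derivative of `r ↦ D (r • y)`
at `r = 1`. -/
noncomputable def radialDeriv (j : ℕ) (D : X → Y) (y : X) : Y :=
  iteratedFDeriv ℝ j D y fun _ ↦ y

theorem radialDeriv_eq_iteratedDeriv {j : ℕ} {D : X → Y} (hD : ContDiff ℝ j D) (y : X) :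
    radialDeriv j D y = iteratedDeriv j (fun r : ℝ ↦ D (r • y)) 1 := by
  have hcomp := (ContinuousLinearMap.toSpanSingleton ℝ y).iteratedFDeriv_comp_right hD 1 le_rfl
  rw [iteratedDeriv_eq_iteratedFDeriv]
  change _ = iteratedFDeriv ℝ j (D ∘ ContinuousLinearMap.toSpanSingleton ℝ y) 1 _
  simp [hcomp, radialDeriv]

theorem iteratedFDeriv_apply_const_smul (k : ℕ) (D : X → Y) (z u : X) (s : ℝ) :
    iteratedFDeriv ℝ k D z (fun _ ↦ s • u) = s ^ k • iteratedFDeriv ℝ k D z fun _ ↦ u := by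
  simp [ContinuousMultilinearMap.map_smul_univ _ (fun _ ↦ s) (fun _ ↦ u)]

variable [CompleteSpace Y]

theorem map_one_add_smul_eq_pow_smul_integral {n : ℕ} {D : X → Y} (hD : ContDiff ℝ (n + 1) D)
    {u : X} (hu : ∀ j < n + 1, radialDeriv j D u = 0) (s : ℝ) :
    D ((1 + s) • u) = s ^ (n + 1) • (n ! : ℝ)⁻¹ • ∫ t in (0 : ℝ)..1, (1 - t) ^ n •
      iteratedFDeriv ℝ (n + 1) D ((1 + t * s) • u) fun _ ↦ u := by
  have htaylor := map_add_eq_sum_add_integral_iteratedFDeriv (f := D) (x := u) (y := s • u)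
    (n := n) fun t _ ↦ hD.contDiffAt
  have hpoly : ∀ k ∈ Finset.range (n + 1),
      (k ! : ℝ)⁻¹ • iteratedFDeriv ℝ k D u (fun _ ↦ s • u) = 0 := by
    intro k hk
    have hk₀ : iteratedFDeriv ℝ k D u (fun _ ↦ u) = 0 := hu k (Finset.mem_range.1 hk)
    rw [iteratedFDeriv_apply_const_smul, hk₀, smul_zero, smul_zero]
  rw [Finset.sum_eq_zero hpoly, zero_add] at htaylor
  simp only [iteratedFDeriv_apply_const_smul, smul_comm _ (s ^ (n + 1)),
    intervalIntegral.integral_smul] at htaylor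
  simpa only [add_smul, mul_smul, one_smul] using htaylor

theorem exists_continuous_radial_remainder {m : ℕ} {D : X → Y} (hD : ContDiff ℝ m D) :
    ∃ R : ℝ × X → Y, Continuous R ∧ (∀ u, R (0, u) = (m ! : ℝ)⁻¹ • radialDeriv m D u) ∧
      ∀ s u, (∀ j < m, radialDeriv j D u = 0) → D ((1 + s) • u) = s ^ m • R (s, u) := by
  cases m with
  | zero =>
    refine ⟨fun p ↦ D ((1 + p.1) • p.2), hD.continuous.comp (by fun_prop), ?_, ?_⟩ <;>
    simp [radialDeriv]
  | succ n =>
    have hderiv : Continuous (iteratedFDeriv ℝ (n + 1) D) := hD.continuous_iteratedFDeriv le_rfl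
    refine ⟨fun p ↦ (n ! : ℝ)⁻¹ • ∫ t in (0 : ℝ)..1, (1 - t) ^ n •
      iteratedFDeriv ℝ (n + 1) D ((1 + t * p.1) • p.2) fun _ ↦ p.2, ?_, fun u ↦ ?_,
      fun s u hu ↦ map_one_add_smul_eq_pow_smul_integral (by exact_mod_cast hD) hu s⟩
    · have hintegrand : Continuous fun q : (ℝ × X) × ℝ ↦ (1 - q.2) ^ n •
          iteratedFDeriv ℝ (n + 1) D ((1 + q.2 * q.1.1) • q.1.2) fun _ ↦ q.1.2 :=
        .smul (by fun_prop) ((hderiv.comp (by fun_prop)).eval (by fun_prop))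
      exact (intervalIntegral.continuous_parametric_intervalIntegral_of_continuous'
        hintegrand 0 1).const_smul _
    · have hint : ∫ t in (0 : ℝ)..1, (1 - t) ^ n = ((n : ℝ) + 1)⁻¹ := by
        simp [intervalIntegral.integral_comp_sub_left (fun t : ℝ ↦ t ^ n) 1]
      simp only [mul_zero, add_zero, one_smul, intervalIntegral.integral_smul_const, hint,
        smul_smul, radialDeriv]
      rw [Nat.factorial_succ, Nat.cast_mul, mul_inv, mul_comm, Nat.cast_succ]

theorem map_smul_eq_zero_of_radialDeriv_eq_zero {D : X → Y} (hD : AnalyticOnNhd ℝ D univ) {u : X}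
    (hu : ∀ j, radialDeriv j D u = 0) (r : ℝ) : D (r • u) = 0 := by
  have hline : AnalyticOnNhd ℝ (fun r : ℝ ↦ D (r • u)) univ := fun r _ ↦
    (hD (r • u) trivial).comp (f := fun r : ℝ ↦ r • u) (by fun_prop)
  have horder : analyticOrderAt (fun r : ℝ ↦ D (r • u)) 1 = ⊤ := by
    refine ENat.eq_top_iff_forall_ge.2 fun n ↦ ?_
    rw [natCast_le_analyticOrderAt_iff_iteratedDeriv_eq_zero (hline 1 trivial)]
    intro j _
    rw [← radialDeriv_eq_iteratedDeriv hD.contDiff, hu]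
  exact congrFun (hline.eq_of_eventuallyEq analyticOnNhd_const
    (analyticOrderAt_eq_top.1 horder)) r

end RadialDerivatives

section RadialExpansion

variable {X Y : Type*} [NormedAddCommGroup X] [NormedSpace ℝ X] [NormedAddCommGroup Y]
  [NormedSpace ℝ Y]

theorem tendsto_normalize {y : X} (hy : ‖y‖ = 1) : Tendsto NormedSpace.normalize (𝓝 y) (𝓝 y) := by
  have hcont : ContinuousAt (fun x : X ↦ ‖x‖⁻¹ • x) y :=
    (continuous_norm.continuousAt.inv₀ (by simp [hy])).smul continuousAt_id
  rwa [ContinuousAt, hy, inv_one, one_smul] at hcont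

theorem eventually_norm_normalize {y : X} (hy : ‖y‖ = 1) :
    ∀ᶠ x in 𝓝 y, ‖NormedSpace.normalize x‖ = 1 := by
  filter_upwards [eventually_ne_nhds (norm_ne_zero_iff.1 (hy.trans_ne one_ne_zero))] with x hx
  exact NormedSpace.norm_normalize hx

theorem tendsto_radial_quotient [CompleteSpace Y] {m : ℕ} {D : X → Y} (hD : ContDiff ℝ m D) {y : X}
    (hy : ‖y‖ = 1) (hflat : ∀ᶠ u in 𝓝 y, ‖u‖ = 1 → ∀ j < m, radialDeriv j D u = 0) :
    Tendsto (fun x ↦ ((‖x‖ - 1) ^ m)⁻¹ • D x) (𝓝[Metric.ball 0 1] y)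
      (𝓝 ((m ! : ℝ)⁻¹ • radialDeriv m D y)) := by
  obtain ⟨R, hR, hR₀, hRD⟩ := exists_continuous_radial_remainder hD
  have hpolar : Tendsto (fun x : X ↦ (‖x‖ - 1, NormedSpace.normalize x)) (𝓝 y) (𝓝 (0, y)) := by
    refine Tendsto.prodMk_nhds ?_ (tendsto_normalize hy)
    simpa [hy] using (continuous_norm.sub continuous_const).tendsto y (f := fun x : X ↦ ‖x‖ - 1)
  rw [← hR₀]
  refine (((hR.tendsto _).comp hpolar).mono_left nhdsWithin_le_nhds).congr' ?_
  filter_upwards [self_mem_nhdsWithin, nhdsWithin_le_nhds (eventually_norm_normalize hy),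
    nhdsWithin_le_nhds ((tendsto_normalize hy).eventually hflat)] with x hx hunit hflat
  have hDx : D x = (‖x‖ - 1) ^ m • R (‖x‖ - 1, NormedSpace.normalize x) := by
    rw [← hRD _ _ (hflat hunit), add_sub_cancel, NormedSpace.norm_smul_normalize]
  have hne : ‖x‖ - 1 ≠ 0 := (sub_neg.2 (mem_ball_zero_iff.1 hx)).ne
  rw [hDx, inv_smul_smul₀ (pow_ne_zero m hne), Function.comp_apply]

theorem eq_zero_of_eventually_radialDeriv_eq_zero [CompleteSpace Y] {D : X → Y}
    (hD : AnalyticOnNhd ℝ D univ) {x₀ : X} (hx₀ : ‖x₀‖ = 1)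
    (hflat : ∀ᶠ u in 𝓝 x₀, ‖u‖ = 1 → ∀ j, radialDeriv j D u = 0) : D = 0 := by
  refine hD.eq_of_eventuallyEq analyticOnNhd_const (z₀ := x₀) ?_
  filter_upwards [(tendsto_normalize hx₀).eventually hflat,
    eventually_norm_normalize hx₀] with x hflat hunit
  rw [← NormedSpace.norm_smul_normalize x]
  exact map_smul_eq_zero_of_radialDeriv_eq_zero hD (hflat hunit) _

end RadialExpansion

section GlancingDirections

variable {X : Type*} [NormedAddCommGroup X] [InnerProductSpace ℝ X] {x₀ v₀ : X}

theorem eventually_exists_tangent_direction (hx₀v₀ : ⟪x₀, v₀⟫ = 0) (hv₀ : ‖v₀‖ = 1)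
    {P : X × X → Prop} (hP : ∀ᶠ q in 𝓝 (x₀, v₀), P q) :
    ∀ᶠ y in 𝓝 x₀, ‖y‖ = 1 → ∃ v, ‖v‖ = 1 ∧ ⟪y, v⟫ = 0 ∧ P (y, v) := by
  have hproj : Tendsto (fun y ↦ v₀ - ⟪y, v₀⟫ • y) (𝓝 x₀) (𝓝 v₀) := by
    have hcont : Continuous fun y ↦ v₀ - ⟪y, v₀⟫ • y := by fun_prop
    simpa [hx₀v₀] using hcont.tendsto x₀
  have hpair := tendsto_id.prodMk_nhds ((tendsto_normalize hv₀).comp hproj)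
  filter_upwards [hpair.eventually hP,
    hproj.eventually (eventually_norm_normalize hv₀)] with y hPy hunit hy
  refine ⟨_, hunit, ?_, hPy⟩
  simp [NormedSpace.normalize, inner_smul_right, inner_sub_right, hy]

variable {A : Type*} [NormedRing A] [NormedAlgebra ℝ A] {Φ Ψ : X → A}

theorem eventually_sameScatteringData_chord {y v : X} (hy : ‖y‖ = 1)
    (hv : ‖v‖ = 1) (hyv : ⟪y, v⟫ = 0)
    (hscat : ∀ᶠ q in 𝓝 (y, v), ‖q.2‖ = 1 → ⟪q.1, q.2⟫ = 0 → ‖q.1‖ < 1 →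
      SameScatteringData (fun t ↦ Φ (q.1 + t • q.2)) (fun t ↦ Ψ (q.1 + t • q.2))
        √(1 - ‖q.1‖ ^ 2)) :
    ∀ᶠ a in 𝓝[>] (0 : ℝ), SameScatteringData (fun t ↦ Φ (chord y v a t))
      (fun t ↦ Ψ (chord y v a t)) a := by
  have hfoot : Tendsto (fun a : ℝ ↦ (√(1 - a ^ 2) • y, v)) (𝓝[>] 0) (𝓝 (y, v)) := by
    have hcont : Continuous fun a : ℝ ↦ (√(1 - a ^ 2) • y, v) := by fun_prop
    simpa using (hcont.tendsto 0).mono_left nhdsWithin_le_nhds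
  filter_upwards [hfoot.eventually hscat, Ioo_mem_nhdsGT one_pos] with a hsame ha
  have hnorm : ‖√(1 - a ^ 2) • y‖ ^ 2 = 1 - a ^ 2 := by
    rw [norm_smul, hy, mul_one, Real.norm_eq_abs, sq_abs, Real.sq_sqrt (by nlinarith [ha.1, ha.2])]
  have hlt : ‖√(1 - a ^ 2) • y‖ < 1 := by
    rw [← sq_lt_one_iff₀ (norm_nonneg _), hnorm]
    linarith [pow_pos ha.1 2]
  have := hsame hv (by simp [inner_smul_left, hyv]) hlt
  rwa [hnorm, sub_sub_cancel, Real.sqrt_sq ha.1.le] at this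

end GlancingDirections

section Uniqueness

variable {X : Type*} [NormedAddCommGroup X] [InnerProductSpace ℝ X]
  {A : Type*} [NormedRing A] [NormedAlgebra ℝ A] [CompleteSpace A] {Φ Ψ : X → A}

theorem radialDeriv_sub_eq_zero_of_sameScatteringData {m : ℕ} (hΦ : ContDiff ℝ m Φ)
    (hΨ : ContDiff ℝ m Ψ) {y v : X} (hy : ‖y‖ = 1) (hv : ‖v‖ = 1) (hyv : ⟪y, v⟫ = 0)
    (hscat : ∀ᶠ a in 𝓝[>] (0 : ℝ), SameScatteringData (fun t ↦ Φ (chord y v a t))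
      (fun t ↦ Ψ (chord y v a t)) a)
    (hflat : ∀ᶠ u in 𝓝 y, ‖u‖ = 1 → ∀ j < m, radialDeriv j (Φ - Ψ) u = 0) :
    radialDeriv m (Φ - Ψ) y = 0 := by
  set B := (m ! : ℝ)⁻¹ • radialDeriv m (Φ - Ψ) y with hB
  suffices hB₀ : B = 0 by simpa [hB, Nat.factorial_ne_zero] using hB₀
  by_contra hB₀
  obtain ⟨l, hl⟩ := SeparatingDual.exists_ne_zero (R := ℝ) hB₀
  have hlim : Tendsto
      (fun q : X × A × A ↦ l (q.2.1 * (((‖q.1‖ - 1) ^ m)⁻¹ • (Φ - Ψ) q.1) * q.2.2))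
      (𝓝[Metric.ball 0 1] y ×ˢ 𝓝 1) (𝓝 (l (1 * B * 1))) := by
    have hW : Tendsto (fun q : X × A × A ↦ q.2.1) (𝓝[Metric.ball 0 1] y ×ˢ 𝓝 1) (𝓝 1) :=
      (continuous_fst.tendsto (1 : A × A)).comp tendsto_snd
    have hV : Tendsto (fun q : X × A × A ↦ q.2.2) (𝓝[Metric.ball 0 1] y ×ˢ 𝓝 1) (𝓝 1) :=
      (continuous_snd.tendsto (1 : A × A)).comp tendsto_snd
    exact (l.continuous.tendsto _).comp
      ((hW.mul ((tendsto_radial_quotient (hΦ.sub hΨ) hy hflat).comp tendsto_fst)).mul hV)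
  rw [one_mul, mul_one] at hlim
  refine frequently_functional_eq_zero_of_sameScatteringData hΦ.continuous hΨ.continuous hy hv hyv
    hscat l ?_
  filter_upwards [hlim.eventually_ne hl] with q hq hq₀
  apply hq
  rw [mul_smul_comm, smul_mul_assoc, map_smul, Pi.sub_apply, hq₀, smul_zero]

theorem eventually_radialDeriv_sub_eq_zero {x₀ v₀ : X} (hv₀ : ‖v₀‖ = 1)
    (hx₀v₀ : ⟪x₀, v₀⟫ = 0) (hΦ : ContDiff ℝ ∞ Φ) (hΨ : ContDiff ℝ ∞ Ψ)
    (hscat : ∀ᶠ q in 𝓝 (x₀, v₀), ‖q.2‖ = 1 → ⟪q.1, q.2⟫ = 0 → ‖q.1‖ < 1 →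
      SameScatteringData (fun t ↦ Φ (q.1 + t • q.2)) (fun t ↦ Ψ (q.1 + t • q.2))
        √(1 - ‖q.1‖ ^ 2)) :
    ∀ᶠ y in 𝓝 x₀, ‖y‖ = 1 → ∀ m, radialDeriv m (Φ - Ψ) y = 0 := by
  obtain ⟨O, hO, hO_open, hx₀O⟩ := eventually_nhds_iff.1
    (eventually_exists_tangent_direction hx₀v₀ hv₀ hscat.eventually_nhds)
  filter_upwards [hO_open.mem_nhds hx₀O] with y hyO hy m
  induction m using Nat.strong_induction_on generalizing y with
  | h m ih =>
    obtain ⟨v, hv, hyv, hnear⟩ := hO y hyO hy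
    refine radialDeriv_sub_eq_zero_of_sameScatteringData (contDiff_infty.1 hΦ m)
      (contDiff_infty.1 hΨ m) hy hv hyv (eventually_sameScatteringData_chord hy hv hyv hnear) ?_
    filter_upwards [hO_open.mem_nhds hyO] with u huO hu j hj
    exact ih j hj u huO hu

theorem nonabelian_ray_transform_higgs_uniqueness_ball_general {x₀ v₀ : X}
    (hx₀ : ‖x₀‖ = 1) (hv₀ : ‖v₀‖ = 1) (hx₀v₀ : ⟪x₀, v₀⟫ = 0)
    (hΦ : AnalyticOnNhd ℝ Φ univ) (hΨ : AnalyticOnNhd ℝ Ψ univ)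
    (hscat : ∃ δ > (0 : ℝ), ∀ v : X, ‖v‖ = 1 → ‖v - v₀‖ < δ →
      ∀ p : X, ⟪p, v⟫ = 0 → ‖p - x₀‖ < δ → ‖p‖ < 1 →
        SameScatteringData (fun t ↦ Φ (p + t • v)) (fun t ↦ Ψ (p + t • v)) √(1 - ‖p‖ ^ 2)) :
    Φ = Ψ := by
  obtain ⟨δ, hδ, hscat⟩ := hscat
  have hnear : ∀ᶠ q in 𝓝 (x₀, v₀), ‖q.2‖ = 1 → ⟪q.1, q.2⟫ = 0 → ‖q.1‖ < 1 →
      SameScatteringData (fun t ↦ Φ (q.1 + t • q.2)) (fun t ↦ Ψ (q.1 + t • q.2))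
        √(1 - ‖q.1‖ ^ 2) := by
    filter_upwards [prod_mem_nhds (Metric.ball_mem_nhds x₀ hδ) (Metric.ball_mem_nhds v₀ hδ)]
      with q hq hv hpv hp
    exact hscat q.2 hv (mem_ball_iff_norm.1 hq.2) q.1 hpv (mem_ball_iff_norm.1 hq.1) hp
  exact sub_eq_zero.1 <| eq_zero_of_eventually_radialDeriv_eq_zero (hΦ.sub hΨ) hx₀ <|
    eventually_radialDeriv_sub_eq_zero hv₀ hx₀v₀ hΦ.contDiff hΨ.contDiff hnear

end Uniqueness

/-- Square complex matrices as the Banach algebra of bounded operators on a Hermitian space. -/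
noncomputable def matrixEquivCLM (n : Type*) [Fintype n] [DecidableEq n] :
    Matrix n n ℂ ≃A[ℝ] (EuclideanSpace ℂ n →L[ℂ] EuclideanSpace ℂ n) :=
  let e := (Matrix.toEuclideanCLM (n := n) (𝕜 := ℂ)).toAlgEquiv.restrictScalars ℝ
  have : FiniteDimensional ℝ (EuclideanSpace ℂ n →L[ℂ] EuclideanSpace ℂ n) :=
    e.toLinearEquiv.finiteDimensional
  { e with
    continuous_toFun := e.toLinearMap.continuous_of_finiteDimensional
    continuous_invFun := e.symm.toLinearMap.continuous_of_finiteDimensional }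

/-- Global uniqueness for the nonabelian ray transform of real-analytic Higgs fields on
the closed unit ball in ℝⁿ from local scattering data near a single glancing direction
`(x₀, v₀)`: if the scattering data of `Φ` and `Ψ` agree along every line close to the
tangent line at `x₀`, then `Φ = Ψ` on the whole closed unit ball. -/
theorem nonabelian_ray_transform_higgs_uniqueness_ball
    (n N : ℕ) (hn : 2 ≤ n) (hN : 1 ≤ N)
    (x₀ v₀ : EuclideanSpace ℝ (Fin n))
    (hx₀ : ‖x₀‖ = 1) (hv₀ : ‖v₀‖ = 1) (hx₀v₀ : ⟪x₀, v₀⟫ = 0)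
    (Φ Ψ : EuclideanSpace ℝ (Fin n) → Matrix (Fin N) (Fin N) ℂ)
    (hΦ : AnalyticOnNhd ℝ Φ Set.univ)
    (hΨ : AnalyticOnNhd ℝ Ψ Set.univ)
    (hscat : ∃ δ > (0 : ℝ), ∀ v : EuclideanSpace ℝ (Fin n), ‖v‖ = 1 → ‖v - v₀‖ < δ →
      ∀ p : EuclideanSpace ℝ (Fin n), ⟪p, v⟫ = 0 → ‖p - x₀‖ < δ → ‖p‖ < 1 →
        ∀ U V : ℝ → Matrix (Fin N) (Fin N) ℂ,
          (∀ t : ℝ, HasDerivAt U (-(Φ (p + t • v) * U t)) t) →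
          (∀ t : ℝ, HasDerivAt V (-(Ψ (p + t • v) * V t)) t) →
          U (Real.sqrt (1 - ‖p‖ ^ 2)) = 1 → V (Real.sqrt (1 - ‖p‖ ^ 2)) = 1 →
          U (-Real.sqrt (1 - ‖p‖ ^ 2)) = V (-Real.sqrt (1 - ‖p‖ ^ 2))) :
    ∀ x : EuclideanSpace ℝ (Fin n), ‖x‖ ≤ 1 → Φ x = Ψ x := by
  obtain ⟨δ, hδ, hscat⟩ := hscat
  let e := matrixEquivCLM (Fin N)
  have analyticOnNhd_comp {F : EuclideanSpace ℝ (Fin n) → Matrix (Fin N) (Fin N) ℂ}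
      (hF : AnalyticOnNhd ℝ F Set.univ) : AnalyticOnNhd ℝ (fun x ↦ e (F x)) Set.univ :=
    e.toContinuousLinearEquiv.toContinuousLinearMap.comp_analyticOnNhd hF
  have heq : (fun x ↦ e (Φ x)) = fun x ↦ e (Ψ x) :=
    nonabelian_ray_transform_higgs_uniqueness_ball_general hx₀ hv₀ hx₀v₀ (analyticOnNhd_comp hΦ)
      (analyticOnNhd_comp hΨ) ⟨δ, hδ, fun v hv hvδ p hpv hpδ hp ↦
        SameScatteringData.map (hscat v hv hvδ p hpv hpδ hp) e⟩
  exact fun x _ ↦ e.injective (congrFun heq x)
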